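/- Every term of the name algebra has exactly one normal form: for every term t there exists a unique term n such that t →* n and n is in normal form. -/

import Mathlib

/-- Terms of the name algebra over atoms in ℕ. -/
inductive Term : Type
  | var : ℕ → Term
  | projL : Term → Term
  | projR : Term → Term
  | join : Term → Term → Term
deriving DecidableEq

/-- One-step rewrite relation: the three rules `(u ∧ v).l → u`, `(u ∧ v).r → v`,
`(u.l ∧ u.r) → u`, closed under all term contexts. -/
inductive Step : Term → Term → Prop
  | splitL (u v : Term) : Step (Term.projL (Term.join u v)) u
  | splitR (u v : Term) : Step (Term.projR (Term.join u v)) v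
  | merge (u : Term) : Step (Term.join (Term.projL u) (Term.projR u)) u
  | congL {a b : Term} : Step a b → Step (Term.projL a) (Term.projL b)
  | congR {a b : Term} : Step a b → Step (Term.projR a) (Term.projR b)
  | congJoinL {a b : Term} (v : Term) : Step a b → Step (Term.join a v) (Term.join b v)
  | congJoinR {a b : Term} (u : Term) : Step a b → Step (Term.join u a) (Term.join u b)

/-- Reflexive-transitive closure of `Step`. -/
def Steps : Term → Term → Prop := Relation.ReflTransGen Step

/-- A term is in normal form if no rewrite step applies to it. -/
def NormalForm (n : Term) : Prop := ¬ ∃ m, Step n m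

/-- `u ≈ v` : the normal forms of `u` and `v` coincide, i.e. they reach a common normal form. -/
def TermEquiv (u v : Term) : Prop := ∃ n, NormalForm n ∧ Steps u n ∧ Steps v n

def pl : Term → Term
  | Term.join u _ => u
  | t => Term.projL t

def pr : Term → Term
  | Term.join _ v => v
  | t => Term.projR t

def mj (a b : Term) : Term :=
  match a, b with
  | Term.projL u, Term.projR v => if u = v then u else Term.join (Term.projL u) (Term.projR v)
  | a, b => Term.join a b

def nf : Term → Term
  | Term.var n => Term.var n
  | Term.projL a => pl (nf a)
  | Term.projR a => pr (nf a)
  | Term.join a b => mj (nf a) (nf b)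

theorem mj_cases (a b : Term) :
    (∃ u, a = Term.projL u ∧ b = Term.projR u ∧ mj a b = u) ∨
    ((¬ ∃ u, a = Term.projL u ∧ b = Term.projR u) ∧ mj a b = Term.join a b) := by
  cases a <;> cases b <;> simp [mj]
  split_ifs <;> simp_all [eq_comm]

theorem pl_cases (a : Term) :
    (∃ u v, a = Term.join u v ∧ pl a = u) ∨
    ((¬ ∃ u v, a = Term.join u v) ∧ pl a = Term.projL a) := by
  cases a <;> simp [pl]

theorem pr_cases (a : Term) :
    (∃ u v, a = Term.join u v ∧ pr a = v) ∨
    ((¬ ∃ u v, a = Term.join u v) ∧ pr a = Term.projR a) := by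
  cases a <;> simp [pr]

theorem normal_join {a b : Term} (h : NormalForm (Term.join a b)) :
    NormalForm a ∧ NormalForm b ∧ ¬ ∃ u, a = Term.projL u ∧ b = Term.projR u := by
  refine ⟨fun ⟨m, hm⟩ => h ⟨_, .congJoinL _ hm⟩, fun ⟨m, hm⟩ => h ⟨_, .congJoinR _ hm⟩, ?_⟩
  rintro ⟨u, rfl, rfl⟩
  exact h ⟨_, .merge u⟩

theorem normal_projL {a : Term} (h : NormalForm (Term.projL a)) :
    NormalForm a ∧ ¬ ∃ u v, a = Term.join u v := by
  refine ⟨fun ⟨m, hm⟩ => h ⟨_, .congL hm⟩, ?_⟩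
  rintro ⟨u, v, rfl⟩
  exact h ⟨_, .splitL u v⟩

theorem normal_projR {a : Term} (h : NormalForm (Term.projR a)) :
    NormalForm a ∧ ¬ ∃ u v, a = Term.join u v := by
  refine ⟨fun ⟨m, hm⟩ => h ⟨_, .congR hm⟩, ?_⟩
  rintro ⟨u, v, rfl⟩
  exact h ⟨_, .splitR u v⟩

theorem nf_normal (t : Term) : NormalForm (nf t) := by
  induction t with
  | var n => rintro ⟨m, hm⟩; cases hm
  | projL a ih =>
    rw [nf]
    rcases pl_cases (nf a) with ⟨u, v, h, e⟩ | ⟨h, e⟩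
    · rw [e]; rw [h] at ih; exact (normal_join ih).1
    · rw [e]; rintro ⟨m, hm⟩
      generalize nf a = x at *
      cases hm with
      | splitL u v => exact h ⟨_, _, rfl⟩
      | congL hm => exact ih ⟨_, hm⟩
  | projR a ih =>
    rw [nf]
    rcases pr_cases (nf a) with ⟨u, v, h, e⟩ | ⟨h, e⟩
    · rw [e]; rw [h] at ih; exact (normal_join ih).2.1
    · rw [e]; rintro ⟨m, hm⟩
      generalize nf a = x at *
      cases hm with
      | splitR u v => exact h ⟨_, _, rfl⟩
      | congR hm => exact ih ⟨_, hm⟩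
  | join a b iha ihb =>
    rw [nf]
    rcases mj_cases (nf a) (nf b) with ⟨u, h, h', e⟩ | ⟨h, e⟩
    · rw [e]; rw [h] at iha; exact (normal_projL iha).1
    · rw [e]; rintro ⟨m, hm⟩
      generalize nf a = x at *
      generalize nf b = y at *
      cases hm with
      | merge u => exact h ⟨_, rfl, rfl⟩
      | congJoinL _ hm => exact iha ⟨_, hm⟩
      | congJoinR _ hm => exact ihb ⟨_, hm⟩

theorem nf_steps (t : Term) : Relation.ReflTransGen Step t (nf t) := by
  induction t with
  | var n => exact .refl
  | projL a ih =>
    have h1 : Relation.ReflTransGen Step (Term.projL a) (Term.projL (nf a)) :=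
      ih.lift Term.projL fun _ _ h => .congL h
    rw [nf]
    rcases pl_cases (nf a) with ⟨u, v, h, e⟩ | ⟨h, e⟩
    · rw [e]; rw [h] at h1; exact h1.tail (.splitL u v)
    · rwa [e]
  | projR a ih =>
    have h1 : Relation.ReflTransGen Step (Term.projR a) (Term.projR (nf a)) :=
      ih.lift Term.projR fun _ _ h => .congR h
    rw [nf]
    rcases pr_cases (nf a) with ⟨u, v, h, e⟩ | ⟨h, e⟩
    · rw [e]; rw [h] at h1; exact h1.tail (.splitR u v)
    · rwa [e]
  | join a b iha ihb =>
    have h1 : Relation.ReflTransGen Step (Term.join a b) (Term.join (nf a) b) :=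
      iha.lift (fun x => Term.join x b) fun _ _ h => .congJoinL _ h
    have h2 : Relation.ReflTransGen Step (Term.join (nf a) b) (Term.join (nf a) (nf b)) :=
      ihb.lift (fun x => Term.join (nf a) x) fun _ _ h => .congJoinR _ h
    have h3 := h1.trans h2
    rw [nf]
    rcases mj_cases (nf a) (nf b) with ⟨u, h, h', e⟩ | ⟨h, e⟩
    · rw [e]; rw [h, h'] at h3; exact h3.tail (.merge u)
    · rwa [e]

theorem nf_step {a b : Term} (h : Step a b) : nf a = nf b := by
  induction h with
  | splitL u v =>
    simp only [nf]
    rcases mj_cases (nf u) (nf v) with ⟨w, h, h', e⟩ | ⟨h, e⟩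
    · rw [e, h]
      have := nf_normal u
      rw [h] at this
      rcases pl_cases w with ⟨x, y, hw, _⟩ | ⟨_, e'⟩
      · exact absurd ⟨x, y, hw⟩ (normal_projL this).2
      · exact e'
    · rw [e, pl]
  | splitR u v =>
    simp only [nf]
    rcases mj_cases (nf u) (nf v) with ⟨w, h, h', e⟩ | ⟨h, e⟩
    · rw [e, h']
      have := nf_normal v
      rw [h'] at this
      rcases pr_cases w with ⟨x, y, hw, _⟩ | ⟨_, e'⟩
      · exact absurd ⟨x, y, hw⟩ (normal_projR this).2
      · exact e'
    · rw [e, pr]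
  | merge u =>
    simp only [nf]
    have := nf_normal u
    generalize nf u = w at *
    cases w with
    | join x y =>
      rcases mj_cases x y with ⟨w, h, h', e⟩ | ⟨h, e⟩
      · exact absurd ⟨w, h, h'⟩ (normal_join this).2.2
      · exact e
    | _ => simp [pl, pr, mj]
  | congL _ ih => simp only [nf, ih]
  | congR _ ih => simp only [nf, ih]
  | congJoinL _ _ ih => simp only [nf, ih]
  | congJoinR _ _ ih => simp only [nf, ih]

theorem nf_eq_of_steps {a b : Term} (h : Relation.ReflTransGen Step a b) : nf a = nf b := by
  induction h with
  | refl => rfl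
  | tail _ h ih => exact ih.trans (nf_step h)

theorem nf_of_normal {n : Term} (h : NormalForm n) : nf n = n := by
  rcases (nf_steps n).cases_head with e | ⟨m, hm, _⟩
  · exact e.symm
  · exact absurd ⟨m, hm⟩ h

/-- Every term of the name algebra has exactly one normal form. -/
theorem unique_normal_form :
    ∀ t : Term, ∃! n : Term, Steps t n ∧ NormalForm n := by
  intro t
  refine ⟨nf t, ⟨nf_steps t, nf_normal t⟩, ?_⟩
  rintro n ⟨h, hn⟩
  rw [← nf_of_normal hn]
  exact (nf_eq_of_steps h).symm
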